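/- Let p be an odd prime and let χ be a primitive Dirichlet character mod p^n with n ≥ 2. Then there exists b_χ ∈ ℤ with p ∤ b_χ, unique modulo p^{n−1}, such that χ(1 + p z) = e^{2πi·b_χ·L(1+pz)/p^n} for all z ∈ ℤ, where L(1+x) = Σ_{j≥1} (−1)^{j−1} x^j / j is the p-adic logarithm (the series converges p-adically for x ∈ pℤ_p). -/

import Mathlib

open Complex Filter

/-- The defining property of the constant `b_χ` attached to a primitive Dirichlet character
`χ` mod `p^n`: for every `z ∈ ℤ`, if `ℓ ∈ ℚ_p` is the value of the `p`-adic logarithm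
`L(1+pz) = Σ_{j≥1} (−1)^{j−1}(pz)^j/j` and `c ∈ ℤ` is any integer congruent to `b·ℓ`
modulo `p^n` in `ℤ_p`, then `χ(1+pz) = e^{2πi c/p^n}` (i.e. `χ(1+pz) = e^{2πi b L(1+pz)/p^n}`
via the canonical additive character of `ℚ_p/ℤ_p`). -/
def IsLogParam (p n : ℕ) [Fact p.Prime] (χ : DirichletCharacter ℂ (p ^ n)) (b : ℤ) : Prop :=
  ∀ z c : ℤ, ∀ ℓ : ℚ_[p],
    Tendsto (fun N : ℕ => ∑ j ∈ Finset.range N,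
        (-1 : ℚ_[p]) ^ j * ((p : ℚ_[p]) * (z : ℚ_[p])) ^ (j + 1) / ((j : ℚ_[p]) + 1))
      atTop (nhds ℓ) →
    ‖(c : ℚ_[p]) - (b : ℚ_[p]) * ℓ‖ ≤ (p : ℝ) ^ (-(n : ℤ)) →
    χ ((1 + (p : ℤ) * z : ℤ) : ZMod (p ^ n)) =
      Complex.exp (2 * Real.pi * Complex.I * (c : ℂ) / (p : ℂ) ^ n)

theorem lp_sq_bound {p : ℕ} [Fact p.Prime] (j : ℕ) (x y : ℚ_[p]) (hx : ‖x‖ ≤ 1)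
    (hy : ‖y‖ ≤ (p : ℝ)⁻¹) :
    ‖x * y ^ (j + 1) / ((j : ℚ_[p]) + 1)‖ ≤ ((j + 1 : ℕ) : ℝ) * ((p : ℝ)⁻¹) ^ (j + 1) := by
  have hp : 1 < (p : ℝ) := by exact_mod_cast (Fact.out : p.Prime).one_lt
  have h1 : ((j + 1 : ℕ) : ℝ)⁻¹ ≤ ‖((j : ℚ_[p]) + 1)‖ := by
    have hv : ‖((j + 1 : ℕ) : ℚ_[p])‖ = (p : ℝ) ^ (-(padicValNat p (j + 1) : ℤ)) := by
      rw [Padic.norm_eq_zpow_neg_valuation (by exact_mod_cast Nat.succ_ne_zero j),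
        Padic.valuation_natCast]
    rw [show ((j : ℚ_[p]) + 1) = ((j + 1 : ℕ) : ℚ_[p]) by push_cast; rfl, hv, zpow_neg,
      zpow_natCast]
    apply inv_anti₀ (by positivity)
    exact_mod_cast Nat.le_of_dvd (Nat.succ_pos j) pow_padicValNat_dvd
  have h0 : (0 : ℝ) < ((j + 1 : ℕ) : ℝ)⁻¹ := by positivity
  have h2 : ‖((j : ℚ_[p]) + 1)‖⁻¹ ≤ ((j + 1 : ℕ) : ℝ) := by
    have := inv_anti₀ h0 h1
    simpa using this
  rw [norm_div, norm_mul, norm_pow, div_eq_mul_inv]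
  calc ‖x‖ * ‖y‖ ^ (j + 1) * ‖((j : ℚ_[p]) + 1)‖⁻¹
      ≤ 1 * ((p : ℝ)⁻¹) ^ (j + 1) * ((j + 1 : ℕ) : ℝ) := by gcongr
    _ = _ := by ring

theorem lp_bound_summable {p : ℕ} [Fact p.Prime] :
    Summable (fun j : ℕ => ((j + 1 : ℕ) : ℝ) * ((p : ℝ)⁻¹) ^ (j + 1)) := by
  have hp : 1 < (p : ℝ) := by exact_mod_cast (Fact.out : p.Prime).one_lt
  have := summable_pow_mul_geometric_of_norm_lt_one (R := ℝ) 1 (r := (p : ℝ)⁻¹)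
    (by rw [norm_inv, Real.norm_natCast]; exact inv_lt_one_of_one_lt₀ hp)
  have h2 := (summable_nat_add_iff 1).2 this
  simpa using h2

theorem lp_pow_zero {p : ℕ} [Fact p.Prime] :
    Tendsto (fun k : ℕ => ((p ^ k : ℕ) : ℚ_[p])) atTop (nhds 0) := by
  have hp : 1 < (p : ℝ) := by exact_mod_cast (Fact.out : p.Prime).one_lt
  have := tendsto_pow_atTop_nhds_zero_of_norm_lt_one (x := (p : ℚ_[p])) Padic.norm_p_lt_one
  simpa using this

theorem lp_choose_eq {p : ℕ} [Fact p.Prime] (k j : ℕ) :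
    (((p ^ k).choose (j + 1) : ℕ) : ℚ_[p]) =
      ((p ^ k : ℕ) : ℚ_[p]) * (((p ^ k - 1).choose j : ℕ) : ℚ_[p]) / ((j : ℚ_[p]) + 1) := by
  have hj : ((j : ℚ_[p]) + 1) ≠ 0 := by exact_mod_cast Nat.succ_ne_zero j
  have hq : 0 < p ^ k := pow_pos (Fact.out : p.Prime).pos k
  obtain ⟨q, hq'⟩ : ∃ q, p ^ k = q + 1 := ⟨p ^ k - 1, by omega⟩
  rw [hq', eq_div_iff hj]
  have := Nat.add_one_mul_choose_eq q j
  simp only [Nat.add_sub_cancel]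
  exact_mod_cast this.symm

theorem lp_choose_tendsto {p : ℕ} [Fact p.Prime] (j : ℕ) :
    Tendsto (fun k : ℕ => (((p ^ k - 1).choose j : ℕ) : ℚ_[p])) atTop (nhds ((-1) ^ j)) := by
  induction j with
  | zero => simp
  | succ j ih =>
    have h1 : Tendsto (fun k : ℕ => (((p ^ k).choose (j + 1) : ℕ) : ℚ_[p])) atTop (nhds 0) := by
      have := (lp_pow_zero (p := p)).mul (ih.div_const ((j : ℚ_[p]) + 1))
      rw [zero_mul] at this
      refine this.congr fun k => ?_
      rw [lp_choose_eq, mul_div_assoc]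
    have h2 := h1.sub ih
    rw [zero_sub] at h2
    rw [pow_succ, mul_neg_one]
    refine h2.congr fun k => ?_
    have hq : 0 < p ^ k := pow_pos (Fact.out : p.Prime).pos k
    obtain ⟨q, hq'⟩ : ∃ q, p ^ k = q + 1 := ⟨p ^ k - 1, by omega⟩
    rw [hq', Nat.choose_succ_succ]
    simp

/-- The logarithm series, and its expression as the limit of `((1+y)^(p^k)-1)/p^k`. -/
theorem lp_log_limit {p : ℕ} [Fact p.Prime] (y : ℚ_[p]) (hy : ‖y‖ ≤ (p : ℝ)⁻¹) :
    ∃ ℓ : ℚ_[p],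
      Tendsto (fun N : ℕ => ∑ j ∈ Finset.range N,
        (-1 : ℚ_[p]) ^ j * y ^ (j + 1) / ((j : ℚ_[p]) + 1)) atTop (nhds ℓ) ∧
      Tendsto (fun k : ℕ => ((1 + y) ^ (p ^ k) - 1) / ((p ^ k : ℕ) : ℚ_[p])) atTop (nhds ℓ) := by
  have hs : Summable (fun j : ℕ => (-1 : ℚ_[p]) ^ j * y ^ (j + 1) / ((j : ℚ_[p]) + 1)) :=
    Summable.of_norm_bounded lp_bound_summable
      (fun j => lp_sq_bound j _ y (by simp) hy)
  refine ⟨_, hs.hasSum.tendsto_sum_nat, ?_⟩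
  have key := tendsto_tsum_of_dominated_convergence (𝓕 := atTop)
    (f := fun (k j : ℕ) => (((p ^ k - 1).choose j : ℕ) : ℚ_[p]) * y ^ (j + 1) / ((j : ℚ_[p]) + 1))
    (g := fun j : ℕ => (-1 : ℚ_[p]) ^ j * y ^ (j + 1) / ((j : ℚ_[p]) + 1))
    (lp_bound_summable (p := p))
    (fun j => ((lp_choose_tendsto j).mul_const _).div_const _)
    (Eventually.of_forall fun k j => lp_sq_bound j _ y
      (by exact_mod_cast Padic.norm_int_le_one (p := p) (((p ^ k - 1).choose j : ℕ) : ℤ)) hy)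
  refine key.congr fun k => ?_
  have hq0 : 0 < p ^ k := pow_pos (Fact.out : p.Prime).pos k
  have hq : ((p ^ k : ℕ) : ℚ_[p]) ≠ 0 := by exact_mod_cast hq0.ne'
  rw [tsum_eq_sum (s := Finset.range (p ^ k))]
  · rw [eq_div_iff hq, add_comm 1 y, add_pow, Finset.sum_range_succ']
    simp only [one_pow, mul_one, pow_zero, Nat.choose_zero_right, Nat.cast_one, add_sub_cancel_right]
    rw [Finset.sum_mul]
    refine Finset.sum_congr rfl fun j _ => ?_
    rw [lp_choose_eq]
    ring
  · intro j hj
    rw [Finset.mem_range, not_lt] at hj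
    rw [Nat.choose_eq_zero_of_lt (by omega)]
    simp

/-- Integer version of the lifting congruence. -/
theorem lp_pow_dvd {p : ℕ} [Fact p.Prime] (hodd : p ≠ 2) {n : ℕ} (hn : 1 ≤ n) {u v : ℤ}
    (hu : ¬ (p : ℤ) ∣ u) (h : (p : ℤ) ^ n ∣ u - v) (k : ℕ) :
    (p : ℤ) ^ (n + k) ∣ u ^ (p ^ k) - v ^ (p ^ k) := by
  have hp : p.Prime := Fact.out
  have h1 : (p : ℤ) ∣ u - v := (dvd_pow_self _ (by omega)).trans h
  rw [pow_dvd_iff_le_emultiplicity, Int.emultiplicity_pow_sub_pow hp (hp.odd_of_ne_two hodd) h1 hu]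
  push_cast
  refine add_le_add (le_emultiplicity_of_pow_dvd h) (le_emultiplicity_of_pow_dvd dvd_rfl)

theorem lp_log_congr {p : ℕ} [Fact p.Prime] (hodd : p ≠ 2) {n : ℕ} (hn : 1 ≤ n) {u v : ℤ}
    (hu : ¬ (p : ℤ) ∣ u) (h : (p : ℤ) ^ n ∣ u - v) {a b : ℚ_[p]}
    (ha : Tendsto (fun k : ℕ => ((u : ℚ_[p]) ^ (p ^ k) - 1) / ((p ^ k : ℕ) : ℚ_[p])) atTop (nhds a))
    (hb : Tendsto (fun k : ℕ => ((v : ℚ_[p]) ^ (p ^ k) - 1) / ((p ^ k : ℕ) : ℚ_[p])) atTop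
      (nhds b)) :
    ‖a - b‖ ≤ (p : ℝ) ^ (-(n : ℤ)) := by
  refine le_of_tendsto (ha.sub hb).norm (Eventually.of_forall fun k => ?_)
  have hp0 : (0 : ℝ) < p := by exact_mod_cast (Fact.out : p.Prime).pos
  have h1 := (Padic.norm_int_le_pow_iff_dvd (p := p) _ _).2 (by exact_mod_cast lp_pow_dvd hodd hn hu h k)
  rw [← sub_div, norm_div]
  push_cast at h1
  rw [sub_sub_sub_cancel_right]
  have h2 : ‖((p ^ k : ℕ) : ℚ_[p])‖ = (p : ℝ) ^ (-(k : ℤ)) := by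
    push_cast; exact Padic.norm_p_pow k
  rw [h2, div_le_iff₀ (by positivity), ← zpow_add₀ hp0.ne']
  refine h1.trans (le_of_eq ?_)
  congr 1
  ring

theorem lp_log_pow {p : ℕ} [Fact p.Prime] (g L : ℚ_[p])
    (hL : Tendsto (fun k : ℕ => (g ^ (p ^ k) - 1) / ((p ^ k : ℕ) : ℚ_[p])) atTop (nhds L)) (m : ℕ) :
    Tendsto (fun k : ℕ => ((g ^ m) ^ (p ^ k) - 1) / ((p ^ k : ℕ) : ℚ_[p])) atTop (nhds (m * L)) := by
  have hq : ∀ k : ℕ, ((p ^ k : ℕ) : ℚ_[p]) ≠ 0 := fun k => by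
    exact_mod_cast (pow_pos (Fact.out : p.Prime).pos k).ne'
  have h1 : Tendsto (fun k : ℕ => g ^ (p ^ k)) atTop (nhds 1) := by
    have := (hL.mul (lp_pow_zero (p := p))).add_const 1
    simp only [mul_zero, zero_add] at this
    refine this.congr fun k => ?_
    rw [div_mul_cancel₀ _ (hq k)]; ring
  induction m with
  | zero => simp
  | succ m ih =>
    have := (ih.mul h1).add hL
    rw [show (m : ℚ_[p]) * L * 1 + L = ((m + 1 : ℕ) : ℚ_[p]) * L by push_cast; ring] at this
    refine this.congr fun k => ?_
    rw [pow_succ g m, mul_pow]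
    have := hq k
    field_simp
    ring

theorem lp_log_gen {p : ℕ} [Fact p.Prime] (hodd : p ≠ 2) (L : ℚ_[p])
    (hL : Tendsto (fun k : ℕ => ((1 + (p : ℚ_[p])) ^ (p ^ k) - 1) / ((p ^ k : ℕ) : ℚ_[p])) atTop
      (nhds L)) : ‖L‖ = (p : ℝ)⁻¹ := by
  have hp : p.Prime := Fact.out
  have hp1 : 1 < (p : ℝ) := by exact_mod_cast hp.one_lt
  have hp3 : 3 ≤ p := by have := hp.two_le; omega
  have h2 : ‖L - p‖ ≤ ((p : ℝ)⁻¹) ^ 2 := by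
    refine le_of_tendsto (hL.sub_const _).norm (Eventually.of_forall fun k => ?_)
    obtain ⟨y, hy⟩ := ZMod.exists_one_add_mul_pow_prime_pow_eq (R := ℤ) (u := p) (v := p) hp
      dvd_rfl (by
        rw [show (p : ℤ) * p * p = (p : ℤ) ^ 3 by ring]
        exact pow_dvd_pow _ hp3) 1 k
    have hy' : (1 + (p : ℚ_[p])) ^ (p ^ k) = 1 + p ^ k * p * (1 + p * (y : ℚ_[p])) := by
      rw [mul_one] at hy
      exact_mod_cast hy
    have hq : ((p ^ k : ℕ) : ℚ_[p]) ≠ 0 := by exact_mod_cast (pow_pos hp.pos k).ne'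
    have : ((1 + (p : ℚ_[p])) ^ (p ^ k) - 1) / ((p ^ k : ℕ) : ℚ_[p]) - p = p ^ 2 * (y : ℚ_[p]) := by
      rw [hy']
      push_cast at hq ⊢
      field_simp
      ring
    rw [this, norm_mul, norm_pow, Padic.norm_p]
    exact mul_le_of_le_one_right (by positivity) (Padic.norm_int_le_one y)
  have h3 : ‖L - p‖ < ‖(p : ℚ_[p])‖ := by
    rw [Padic.norm_p]
    refine h2.trans_lt ?_
    rw [pow_two]
    exact mul_lt_of_lt_one_right (by positivity) (inv_lt_one_of_one_lt₀ hp1)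
  have := IsUltrametricDist.norm_add_eq_max_of_norm_ne_norm h3.ne
  rw [sub_add_cancel, max_eq_right h3.le, Padic.norm_p] at this
  exact this

theorem lp_cyclic {G : Type*} [CommGroup G] [Finite G] [IsCyclic G] (g x : G)
    (hx : x ^ orderOf g = 1) : ∃ m : ℕ, x = g ^ m := by
  classical
  have := Fintype.ofFinite G
  have h1 := IsCyclic.card_pow_eq_one_le (α := G) (orderOf_pos g)
  have h2 : (Finset.univ.filter fun a : G => a ∈ Subgroup.zpowers g) ⊆
      Finset.univ.filter fun a : G => a ^ orderOf g = 1 := by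
    intro a ha
    simp only [Finset.mem_filter, Finset.mem_univ, true_and] at ha ⊢
    obtain ⟨k, rfl⟩ := ha
    simp only
    rw [← zpow_natCast, ← zpow_mul, mul_comm, zpow_mul, zpow_natCast, pow_orderOf_eq_one, one_zpow]
  have h3 : (Finset.univ.filter fun a : G => a ∈ Subgroup.zpowers g).card = orderOf g := by
    rw [← Nat.card_zpowers, Nat.card_eq_fintype_card, Fintype.card_subtype]
  have h4 := Finset.eq_of_subset_of_card_le h2 (by rw [h3]; exact h1)
  have h5 : x ∈ Finset.univ.filter fun a : G => a ∈ Subgroup.zpowers g := by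
    rw [h4]; simpa using hx
  have h6 : x ∈ Subgroup.zpowers g := by simpa using h5
  obtain ⟨m, hm⟩ := mem_powers_iff_mem_zpowers.2 h6
  exact ⟨m, hm.symm⟩

theorem lp_not_dvd {p : ℕ} [Fact p.Prime] (z : ℤ) : ¬ (p : ℤ) ∣ 1 + p * z := by
  intro h
  have h1 : (p : ℤ) ∣ 1 := (dvd_add_left (dvd_mul_right _ z)).1 h
  exact (Nat.prime_iff_prime_int.1 (Fact.out : p.Prime)).not_dvd_one h1

theorem lp_one_pow {p : ℕ} [Fact p.Prime] (hodd : p ≠ 2) (N : ℕ) (z : ℤ) :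
    ((1 + (p : ℤ) * z : ℤ) : ZMod (p ^ (N + 1))) ^ (p ^ N) = 1 := by
  have h := lp_pow_dvd hodd (n := 1) le_rfl (v := 1) (lp_not_dvd z) (by simp) N
  rw [one_pow, add_comm 1 N] at h
  have h2 : (((1 + (p : ℤ) * z) ^ (p ^ N) - 1 : ℤ) : ZMod (p ^ (N + 1))) = 0 := by
    rw [ZMod.intCast_zmod_eq_zero_iff_dvd]
    exact_mod_cast h
  rw [Int.cast_sub, Int.cast_pow, Int.cast_one, sub_eq_zero] at h2
  exact h2

theorem lp_gen {p : ℕ} [Fact p.Prime] (hodd : p ≠ 2) (N : ℕ) (z : ℤ) :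
    ∃ m : ℕ, ((1 + (p : ℤ) * z : ℤ) : ZMod (p ^ (N + 1))) = (1 + (p : ZMod (p ^ (N + 1)))) ^ m := by
  have hp : p.Prime := Fact.out
  have hpos : p ^ N ≠ 0 := (pow_pos hp.pos N).ne'
  have : NeZero (p ^ (N + 1)) := ⟨(pow_pos hp.pos _).ne'⟩
  have := ZMod.isCyclic_units_of_prime_pow p hp hodd (N + 1)
  have hg := ZMod.orderOf_one_add_prime hp hodd N
  have hg1 : (1 + (p : ZMod (p ^ (N + 1)))) ^ (p ^ N) = 1 := by
    rw [← hg]; exact pow_orderOf_eq_one _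
  let g := Units.ofPowEqOne _ _ hg1 hpos
  let x := Units.ofPowEqOne _ _ (lp_one_pow hodd N z) hpos
  have hgo : orderOf g = p ^ N := by
    rw [← hg, ← orderOf_units]; rfl
  obtain ⟨m, hm⟩ := lp_cyclic g x (by
    rw [hgo]; exact Units.pow_ofPowEqOne _ _)
  exact ⟨m, by simpa [g, x] using congrArg Units.val hm⟩

theorem lp_char {p : ℕ} [Fact p.Prime] (hodd : p ≠ 2) (M : ℕ)
    (χ : DirichletCharacter ℂ (p ^ (M + 1 + 1))) (hχ : χ.conductor = p ^ (M + 1 + 1)) :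
    ∃ a : ℕ, ¬ p ∣ a ∧ χ (1 + (p : ZMod (p ^ (M + 1 + 1)))) =
      Complex.exp (2 * Real.pi * Complex.I / ((p ^ (M + 1) : ℕ) : ℂ)) ^ a := by
  have hp : p.Prime := Fact.out
  have hpos : p ^ (M + 1) ≠ 0 := (pow_pos hp.pos _).ne'
  have : NeZero (p ^ (M + 1)) := ⟨hpos⟩
  have : NeZero (p ^ (M + 1 + 1)) := ⟨(pow_pos hp.pos _).ne'⟩
  have hg := ZMod.orderOf_one_add_prime hp hodd (M + 1)
  have hg1 : (1 + (p : ZMod (p ^ (M + 1 + 1)))) ^ (p ^ (M + 1)) = 1 := by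
    rw [← hg]; exact pow_orderOf_eq_one _
  have hζ := Complex.isPrimitiveRoot_exp (p ^ (M + 1)) hpos
  obtain ⟨a, -, ha⟩ := hζ.eq_pow_of_pow_eq_one
    (ξ := χ (1 + (p : ZMod (p ^ (M + 1 + 1))))) (by rw [← map_pow, hg1, map_one])
  refine ⟨a, ?_, ha.symm⟩
  rintro ⟨a', rfl⟩
  have hω : χ (1 + (p : ZMod (p ^ (M + 1 + 1)))) ^ (p ^ M) = 1 := by
    rw [← ha, ← pow_mul, show p * a' * p ^ M = p ^ (M + 1) * a' by ring, pow_mul, hζ.pow_eq_one,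
      one_pow]
  have hd : p ^ (M + 1) ∣ p ^ (M + 1 + 1) := pow_dvd_pow _ (by omega)
  have hf : χ.FactorsThrough (p ^ (M + 1)) := by
    rw [DirichletCharacter.factorsThrough_iff_ker_unitsMap hd]
    intro x hx
    rw [MonoidHom.mem_ker] at hx ⊢
    have hx1 : ((x : ZMod (p ^ (M + 1 + 1))).cast : ZMod (p ^ (M + 1))) = 1 := by
      have := congrArg Units.val hx
      simpa [ZMod.unitsMap_def] using this
    obtain ⟨y, hy⟩ := ZMod.intCast_surjective (x : ZMod (p ^ (M + 1 + 1)))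
    rw [← hy, ZMod.cast_intCast hd] at hx1
    have hdv : (p : ℤ) ^ (M + 1) ∣ y - 1 := by
      have : ((y - 1 : ℤ) : ZMod (p ^ (M + 1))) = 0 := by push_cast; rw [hx1, sub_self]
      rw [ZMod.intCast_zmod_eq_zero_iff_dvd] at this
      exact_mod_cast this
    obtain ⟨t, ht⟩ := hdv
    have hy2 : y = 1 + p * (p ^ M * t) := by linear_combination ht
    obtain ⟨m, hm⟩ := lp_gen hodd (M + 1) (p ^ M * t)
    rw [← hy2, hy] at hm
    have hyp : (p : ℤ) ^ (M + 1 + 1) ∣ y ^ (p ^ 1) - 1 ^ (p ^ 1) := by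
      have := lp_pow_dvd hodd (n := M + 1) (by omega) (u := y) (v := 1)
        (by rw [hy2]; exact lp_not_dvd _) ⟨t, ht⟩ 1
      exact this
    have hxp : (x : ZMod (p ^ (M + 1 + 1))) ^ p = 1 := by
      have h2 : ((y ^ p - 1 : ℤ) : ZMod (p ^ (M + 1 + 1))) = 0 := by
        rw [ZMod.intCast_zmod_eq_zero_iff_dvd]
        simpa using hyp
      rw [Int.cast_sub, Int.cast_pow, Int.cast_one, sub_eq_zero, hy] at h2
      exact h2
    have hdm : p ^ M ∣ m := by
      rw [hm, ← pow_mul] at hxp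
      have := orderOf_dvd_of_pow_eq_one hxp
      rw [hg, pow_succ] at this
      exact Nat.dvd_of_mul_dvd_mul_right hp.pos this
    obtain ⟨s, rfl⟩ := hdm
    apply Units.ext
    rw [MulChar.coe_toUnitHom, hm, map_pow, pow_mul, hω, one_pow, Units.val_one]
  have := DirichletCharacter.conductor_dvd_of_mem_conductorSet χ hf
  rw [hχ] at this
  have := Nat.pow_dvd_pow_iff_le_right hp.one_lt |>.1 this
  omega

theorem lp_exp_iff {P : ℕ} (hP : P ≠ 0) (c d : ℤ) :
    Complex.exp (2 * Real.pi * Complex.I * (c : ℂ) / (P : ℂ)) =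
      Complex.exp (2 * Real.pi * Complex.I * (d : ℂ) / (P : ℂ)) ↔ (P : ℤ) ∣ c - d := by
  have hP' : (P : ℂ) ≠ 0 := by exact_mod_cast hP
  have hpi : (2 * Real.pi * Complex.I : ℂ) ≠ 0 := Complex.two_pi_I_ne_zero
  rw [Complex.exp_eq_exp_iff_exists_int]
  constructor
  · rintro ⟨k, hk⟩
    refine ⟨k, ?_⟩
    have : (c : ℂ) - d = P * k := by
      field_simp at hk
      linear_combination hk
    exact_mod_cast this
  · rintro ⟨k, hk⟩
    refine ⟨k, ?_⟩
    have : (c : ℂ) - d = P * k := by exact_mod_cast hk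
    field_simp
    linear_combination this

theorem lp_approx {p : ℕ} [Fact p.Prime] (x : ℚ_[p]) (hx : ‖x‖ ≤ 1) (n : ℕ) :
    ∃ c : ℤ, ‖(c : ℚ_[p]) - x‖ ≤ (p : ℝ) ^ (-(n : ℤ)) := by
  have h := (PadicInt.norm_le_pow_iff_mem_span_pow _ n).2 (PadicInt.appr_spec n (⟨x, hx⟩ : ℤ_[p]))
  refine ⟨(PadicInt.appr (⟨x, hx⟩ : ℤ_[p]) n : ℕ), ?_⟩
  rw [norm_sub_rev]
  rw [PadicInt.norm_def] at h
  push_cast at h ⊢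
  exact h

/-- for `p` an odd prime and `χ` a primitive Dirichlet character mod `p^n`,
`n ≥ 2`, there is `b_χ ∈ ℤ` with `p ∤ b_χ`, unique modulo `p^{n−1}`, such that
`χ(1+pz) = e^{2πi b_χ L(1+pz)/p^n}` for all `z ∈ ℤ`, where `L` is the `p`-adic logarithm. -/
theorem stmt7 (p n : ℕ) [Fact p.Prime] (hodd : p ≠ 2) (hn : 2 ≤ n)
    (χ : DirichletCharacter ℂ (p ^ n)) (hχ : χ.conductor = p ^ n) :
    ∃ b : ℤ, ¬ (p : ℤ) ∣ b ∧ IsLogParam p n χ b ∧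
      ∀ b' : ℤ, ¬ (p : ℤ) ∣ b' → IsLogParam p n χ b' →
        Int.ModEq ((p : ℤ) ^ (n - 1)) b b' := by
  have hp : p.Prime := Fact.out
  have hp1 : 1 < (p : ℝ) := by exact_mod_cast hp.one_lt
  have hpR : (p : ℝ) ≠ 0 := by positivity
  obtain ⟨M, rfl⟩ : ∃ M, n = M + 1 + 1 := ⟨n - 2, by omega⟩
  have hPpos : p ^ (M + 1 + 1) ≠ 0 := (pow_pos hp.pos _).ne'
  have hexp : ∀ c d : ℤ, Complex.exp (2 * Real.pi * Complex.I * (c : ℂ) / (p : ℂ) ^ (M + 1 + 1)) =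
      Complex.exp (2 * Real.pi * Complex.I * (d : ℂ) / (p : ℂ) ^ (M + 1 + 1)) ↔
      ‖(c : ℚ_[p]) - d‖ ≤ (p : ℝ) ^ (-((M + 1 + 1 : ℕ) : ℤ)) := by
    intro c d
    have := lp_exp_iff hPpos c d
    rw [Nat.cast_pow] at this
    rw [this, ← Int.cast_sub, Padic.norm_int_le_pow_iff_dvd, Nat.cast_pow]
  have htri : ∀ x y w : ℚ_[p], ∀ r : ℝ, ‖x - y‖ ≤ r → ‖y - w‖ ≤ r → ‖x - w‖ ≤ r := by
    intro x y w r h1 h2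
    rw [← sub_add_sub_cancel x y w]
    exact (IsUltrametricDist.norm_add_le_max _ _).trans (max_le h1 h2)
  obtain ⟨a, hpa, ha⟩ := lp_char hodd M χ hχ
  obtain ⟨L, hLs, hL⟩ := lp_log_limit (p : ℚ_[p]) Padic.norm_p.le
  have hLn := lp_log_gen hodd L hL
  have hL0 : L ≠ 0 := by
    rw [← norm_pos_iff, hLn]; positivity
  have han : ‖(a : ℚ_[p])‖ = 1 := by
    refine le_antisymm (by exact_mod_cast Padic.norm_int_le_one (p := p) (a : ℤ)) ?_
    by_contra h
    rw [not_le] at h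
    exact hpa (by exact_mod_cast (Padic.norm_intCast_lt_one_iff (p := p) (k := (a : ℤ))).1 (by exact_mod_cast h))
  have hunit : ‖(a : ℚ_[p]) * p / L‖ = 1 := by
    rw [norm_div, norm_mul, han, hLn, Padic.norm_p, one_mul, div_self (by positivity)]
  obtain ⟨b, hb⟩ := lp_approx _ hunit.le (M + 1)
  have hzp : (p : ℝ) ^ (-((M + 1 : ℕ) : ℤ)) * (p : ℝ)⁻¹ = (p : ℝ) ^ (-((M + 1 + 1 : ℕ) : ℤ)) := by
    rw [← zpow_neg_one, ← zpow_add₀ hpR]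
    congr 1
  have hbL : ‖(b : ℚ_[p]) * L - a * p‖ ≤ (p : ℝ) ^ (-((M + 1 + 1 : ℕ) : ℤ)) := by
    have : (b : ℚ_[p]) * L - a * p = (b - a * p / L) * L := by field_simp
    rw [this, norm_mul, hLn, ← hzp]
    gcongr
  have hlog : IsLogParam p (M + 1 + 1) χ b := by
    intro z c ℓ hℓ hc
    have hy : ‖(p : ℚ_[p]) * (z : ℚ_[p])‖ ≤ (p : ℝ)⁻¹ := by
      rw [norm_mul, Padic.norm_p]
      exact mul_le_of_le_one_right (by positivity) (Padic.norm_int_le_one z)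
    obtain ⟨ℓ', hℓ', hlim⟩ := lp_log_limit _ hy
    obtain rfl := tendsto_nhds_unique hℓ hℓ'
    obtain ⟨m, hm⟩ := lp_gen hodd (M + 1) z
    have hdv : (p : ℤ) ^ (M + 1 + 1) ∣ (1 + p * z) - (1 + p) ^ m := by
      have h2 : (((1 + p * z) - (1 + p) ^ m : ℤ) : ZMod (p ^ (M + 1 + 1))) = 0 := by
        rw [Int.cast_sub, hm]; push_cast; ring
      rw [ZMod.intCast_zmod_eq_zero_iff_dvd] at h2
      exact_mod_cast h2
    have hcon : ‖ℓ - m * L‖ ≤ (p : ℝ) ^ (-((M + 1 + 1 : ℕ) : ℤ)) := by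
      refine lp_log_congr hodd (by omega) (lp_not_dvd z) hdv ?_ ?_
      · push_cast; push_cast at hlim; exact hlim
      · have := lp_log_pow _ _ hL m
        push_cast; push_cast at this; exact this
    have hcam : ‖(c : ℚ_[p]) - ((a * m * p : ℤ) : ℚ_[p])‖ ≤
        (p : ℝ) ^ (-((M + 1 + 1 : ℕ) : ℤ)) := by
      refine htri _ _ _ _ hc (htri _ (b * (m * L)) _ _ ?_ ?_)
      · rw [← mul_sub, norm_mul]
        exact (mul_le_of_le_one_left (norm_nonneg _) (Padic.norm_int_le_one b)).trans hcon
      · have : (b : ℚ_[p]) * (m * L) - ((a * m * p : ℤ) : ℚ_[p]) = ((m : ℤ) : ℚ_[p]) * (b * L - a * p) := by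
          push_cast; ring
        rw [this, norm_mul]
        exact (mul_le_of_le_one_left (norm_nonneg _) (Padic.norm_int_le_one _)).trans hbL
    rw [(hexp _ _).2 hcam, hm, map_pow, ha, ← Complex.exp_nat_mul, ← Complex.exp_nat_mul]
    congr 1
    have : (p : ℂ) ≠ 0 := by exact_mod_cast hp.ne_zero
    push_cast
    field_simp
    ring
  refine ⟨b, ?_, hlog, ?_⟩
  · rw [← Padic.norm_intCast_lt_one_iff (p := p), not_lt]
    have h3 : ‖(b : ℚ_[p]) - a * p / L‖ < ‖(a : ℚ_[p]) * p / L‖ := by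
      rw [hunit]
      refine hb.trans_lt ?_
      exact zpow_lt_one_of_neg₀ hp1 (by push_cast; omega)
    have := IsUltrametricDist.norm_add_eq_max_of_norm_ne_norm h3.ne
    rw [sub_add_cancel, max_eq_right h3.le, hunit] at this
    exact this.ge
  · intro b' _ hb'
    have hLle : ‖L‖ ≤ 1 := by rw [hLn]; exact (inv_lt_one_of_one_lt₀ hp1).le
    have hle : ∀ d : ℤ, ‖(d : ℚ_[p]) * L‖ ≤ 1 := fun d => by
      rw [norm_mul]; exact mul_le_one₀ (Padic.norm_int_le_one d) (norm_nonneg _) hLle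
    obtain ⟨c, hc⟩ := lp_approx _ (hle b) (M + 1 + 1)
    obtain ⟨c', hc'⟩ := lp_approx _ (hle b') (M + 1 + 1)
    have e1 := hlog 1 c L (by simpa using hLs) hc
    have e2 := hb' 1 c' L (by simpa using hLs) hc'
    have h1 := (hexp _ _).1 (e1.symm.trans e2)
    have h2 : ‖(b : ℚ_[p]) * L - b' * L‖ ≤ (p : ℝ) ^ (-((M + 1 + 1 : ℕ) : ℤ)) :=
      htri _ _ _ _ (by rw [norm_sub_rev]; exact hc) (htri _ _ _ _ h1 hc')
    rw [← sub_mul, norm_mul, hLn, ← hzp] at h2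
    have h3 := le_of_mul_le_mul_right h2 (by positivity)
    rw [Int.modEq_comm, Int.modEq_iff_dvd]
    have h4 : ‖((b - b' : ℤ) : ℚ_[p])‖ ≤ (p : ℝ) ^ (-((M + 1 : ℕ) : ℤ)) := by
      push_cast at h3 ⊢; exact h3
    have := (Padic.norm_int_le_pow_iff_dvd _ _).1 h4
    exact_mod_cast this
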